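/- (Theorem 6.9, mirror symmetry in dimension d > 3.) Let d > 3, let G be a finite simple graph with |E| = d|V| − (d+1 choose 2), let s ∈ O(d) be a reflection (an orthogonal involution of ℝ^d whose fixed subspace is a hyperplane, of dimension d − 1), S = {I, s}, and let Φ : S → Aut(G) be a homomorphism with j_s > b_s/(d−2) + d(d−3)/(2(d−2)), where j_s is the number of vertices fixed by Φ(s) and b_s the number of edges fixed setwise by Φ(s). Let (G,p) be an S-symmetric framework of type Φ in ℝ^d whose points p_i affinely span ℝ^d and which admits no nonzero fully (S,Φ)-symmetric self-stress (this last hypothesis playing the role of the paper's '(S,Φ)-generic' assumption, as licensed by Remark 6.2). Then (G,p) has a finite flex preserving the symmetry throughout the path. -/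

import Mathlib

open scoped Classical

noncomputable section

abbrev Euc (d : ℕ) : Type := EuclideanSpace ℝ (Fin d)

/-- The subspace of points of `ℝ^d` fixed by a linear isometry (orthogonal transformation). -/
def fixedSpace {d : ℕ} (x : Euc d ≃ₗᵢ[ℝ] Euc d) : Submodule ℝ (Euc d) :=
  LinearMap.ker (x.toLinearEquiv.toLinearMap - LinearMap.id)

/-!
Restricted to symmetric placements, the squared edge lengths form a quadratic map into the symmetric
edge weights, and its derivative at `p` is the symmetric part of the rigidity matrix. By virtual
work, symmetric edge weights orthogonal to its image form a fully symmetric self-stress, so the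
derivative is surjective. The dimensions of both spaces follow from the traces of the involutions
acting on them, and in the situation of the theorem the kernel is larger than the space of symmetric
infinitesimal isometries. Hence there is a symmetric infinitesimal flex changing some distance to
first order, and surjectivity lets the implicit function theorem integrate it to a finite symmetric
flex.
-/

open Module Filter Topology
open scoped InnerProductSpace

section LevelCurve

theorem exists_levelCurve_hasDerivAt {𝕜 X Y : Type*} [NontriviallyNormedField 𝕜] [CompleteSpace 𝕜]
    [NormedAddCommGroup X] [NormedSpace 𝕜 X] [CompleteSpace X]
    [NormedAddCommGroup Y] [NormedSpace 𝕜 Y] [FiniteDimensional 𝕜 Y]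
    {f : X → Y} {f' : X →L[𝕜] Y} {a v : X} (hf : HasStrictFDerivAt f f' a)
    (hsurj : f'.range = ⊤) (hv : f' v = 0) :
    ∃ γ : 𝕜 → X, γ 0 = a ∧ HasDerivAt γ v 0 ∧
      ∀ᶠ t in 𝓝 0, ContinuousAt γ t ∧ f (γ t) = f a := by
  let w : f'.ker := ⟨v, hv⟩
  let line : 𝕜 → Y × f'.ker := fun t ↦ (f a, t • w)
  have line_continuous : Continuous line := by fun_prop
  have line_tendsto : Tendsto line (𝓝 0) (𝓝 (f a, 0)) := by
    simpa [line] using line_continuous.tendsto 0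
  let chart := hf.implicitToOpenPartialHomeomorph f f' hsurj
  have line_mem_target : ∀ᶠ t in 𝓝 0, line t ∈ chart.target :=
    line_tendsto.eventually
      (chart.open_target.mem_nhds (hf.mem_implicitToOpenPartialHomeomorph_target hsurj))
  refine ⟨fun t ↦ hf.implicitFunction f f' hsurj (f a) (t • w), ?_, ?_, ?_⟩
  · simpa only [zero_smul] using hf.implicitFunction_apply_image hsurj
  · have implicit_deriv : HasFDerivAt (hf.implicitFunction f f' hsurj (f a))
        f'.ker.subtypeL ((0 : 𝕜) • w) := by
      simpa only [zero_smul] using (hf.to_implicitFunction hsurj).hasFDerivAt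
    have ray_deriv : HasDerivAt (fun t : 𝕜 ↦ t • w) w 0 := by
      simpa using (hasDerivAt_id (0 : 𝕜)).smul_const w
    exact implicit_deriv.comp_hasDerivAt 0 ray_deriv
  · filter_upwards [line_tendsto.eventually (hf.map_implicitFunction_eq hsurj), line_mem_target]
      with t level_eq mem_target
    exact ⟨ContinuousAt.comp (f := line) (chart.continuousAt_symm mem_target)
      line_continuous.continuousAt, level_eq⟩

theorem hasStrictFDerivAt_apply_self {𝕜 X Y : Type*} [NontriviallyNormedField 𝕜]
    [NormedAddCommGroup X] [NormedSpace 𝕜 X] [NormedAddCommGroup Y] [NormedSpace 𝕜 Y]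
    (B : X →L[𝕜] X →L[𝕜] Y) (hB : ∀ x y, B x y = B y x) (a : X) :
    HasStrictFDerivAt (fun x ↦ B x x) ((2 : 𝕜) • B a) a := by
  convert! B.hasStrictFDerivAt_of_bilinear (hasStrictFDerivAt_id a) (hasStrictFDerivAt_id a) using 1
  ext w
  simp [two_smul, hB w a]

theorem exists_quadricCurve_hasDerivAt {X Y : Type*}
    [NormedAddCommGroup X] [NormedSpace ℝ X] [FiniteDimensional ℝ X]
    [NormedAddCommGroup Y] [NormedSpace ℝ Y] [FiniteDimensional ℝ Y]
    {B : X →ₗ[ℝ] X →ₗ[ℝ] Y} (hB : ∀ x y, B x y = B y x) {a v : X}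
    (hsurj : Function.Surjective (B a)) (hv : B a v = 0) :
    ∃ γ : ℝ → X, γ 0 = a ∧ HasDerivAt γ v 0 ∧
      ∀ᶠ t in 𝓝 0, ContinuousAt γ t ∧ B (γ t) (γ t) = B a a := by
  have : CompleteSpace X := FiniteDimensional.complete ℝ X
  refine exists_levelCurve_hasDerivAt (𝕜 := ℝ)
    (hasStrictFDerivAt_apply_self B.toContinuousBilinearMap hB a) ?_ (by simp [hv])
  rw [LinearMap.range_eq_top]
  intro y
  obtain ⟨w, hw⟩ := hsurj ((2 : ℝ)⁻¹ • y)
  exact ⟨w, by simp [hw]⟩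

theorem exists_pos_forall_mem_Icc_of_eventually {P : ℝ → Prop} (hP : ∀ᶠ t in 𝓝 0, P t) :
    ∃ ε > 0, ∀ t ∈ Set.Icc (0 : ℝ) 1, P (ε * t) := by
  obtain ⟨δ, δ_pos, hδ⟩ := Metric.eventually_nhds_iff.1 hP
  refine ⟨δ / 2, half_pos δ_pos, fun t ht ↦ hδ ?_⟩
  rw [Real.dist_eq, sub_zero, abs_of_nonneg (mul_nonneg (half_pos δ_pos).le ht.1)]
  nlinarith [ht.2]

end LevelCurve

section EquivariantMaps

theorem two_mul_finrank_fixedSubmodule {K M : Type*} [Field K] [NeZero (2 : K)] [AddCommGroup M]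
    [Module K M] [FiniteDimensional K M] {f : M →ₗ[K] M} (hf : Function.Involutive f) :
    2 * (finrank K f.fixedSubmodule : K) = finrank K M + LinearMap.trace K M f := by
  have two_ne : (2 : K) ≠ 0 := NeZero.ne 2
  have isProj : LinearMap.IsProj f.fixedSubmodule ((2 : K)⁻¹ • (LinearMap.id + f)) := by
    constructor
    · intro x
      simp [hf x, add_comm]
    · intro x hx
      rw [LinearMap.mem_fixedSubmodule_iff] at hx
      rw [LinearMap.smul_apply, LinearMap.add_apply, LinearMap.id_apply, hx, ← two_smul K x,
        inv_smul_smul₀ two_ne]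
  rw [← isProj.trace, map_smul, map_add, LinearMap.trace_id, smul_eq_mul,
    mul_inv_cancel_left₀ two_ne]

variable {ι R W : Type*} [CommRing R] [AddCommGroup W] [Module R W]

/-- The maps `q : ι → W` that intertwine a self-map `τ` of the index set with an endomorphism `C`
of the values, `C (q i) = q (τ i)`. Symmetric placements and velocities of a framework are of this
form, and so are fully symmetric stresses (with `C = id` and `τ` acting on the edges). -/
def equivariantMaps (C : W →ₗ[R] W) (τ : ι → ι) : Submodule R (ι → W) :=
  LinearMap.eqLocus (C.compLeft ι) (LinearMap.funLeft R W τ)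

theorem mem_equivariantMaps {C : W →ₗ[R] W} {τ : ι → ι} {q : ι → W} :
    q ∈ equivariantMaps C τ ↔ ∀ i, C (q i) = q (τ i) := by
  simp [equivariantMaps, funext_iff]

theorem equivariantMaps_eq_fixedSubmodule {C : W →ₗ[R] W} {τ : ι → ι}
    (hτ : Function.Involutive τ) :
    equivariantMaps C τ = (C.compLeft ι ∘ₗ LinearMap.funLeft R W τ).fixedSubmodule := by
  ext q
  simp only [mem_equivariantMaps, LinearMap.mem_fixedSubmodule_iff, funext_iff]
  exact hτ.surjective.forall.trans (forall_congr' fun i ↦ by simp [hτ i])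

theorem trace_compLeft_comp_funLeft [Fintype ι] [DecidableEq ι] [Module.Free R W]
    [Module.Finite R W] (C : W →ₗ[R] W) (τ : ι → ι) :
    LinearMap.trace R (ι → W) (C.compLeft ι ∘ₗ LinearMap.funLeft R W τ) =
      (Finset.univ.filter fun i ↦ τ i = i).card * LinearMap.trace R W C := by
  let b := Module.Free.chooseBasis R W
  rw [LinearMap.trace_eq_matrix_trace R (Pi.basis fun _ : ι ↦ b),
    LinearMap.trace_eq_matrix_trace R b C, Finset.card_filter, Nat.cast_sum, Finset.sum_mul]
  simp only [Matrix.trace, Matrix.diag, LinearMap.toMatrix_apply, Fintype.sum_sigma,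
    Pi.basis_repr, Pi.basis_apply]
  refine Finset.sum_congr rfl fun i _ ↦ ?_
  by_cases h : τ i = i <;> simp [h]

theorem two_mul_finrank_equivariantMaps {K W : Type*} [Field K] [NeZero (2 : K)] [AddCommGroup W]
    [Module K W] [FiniteDimensional K W] [Fintype ι] [DecidableEq ι] {C : W →ₗ[K] W} {τ : ι → ι}
    (hC : Function.Involutive C) (hτ : Function.Involutive τ) :
    2 * (finrank K (equivariantMaps C τ) : K) = Fintype.card ι * finrank K W +
      (Finset.univ.filter fun i ↦ τ i = i).card * LinearMap.trace K W C := by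
  have involutive : Function.Involutive (C.compLeft ι ∘ₗ LinearMap.funLeft K W τ) := by
    intro q
    ext i
    simp [hC _, hτ i]
  rw [equivariantMaps_eq_fixedSubmodule hτ, two_mul_finrank_fixedSubmodule involutive,
    trace_compLeft_comp_funLeft, finrank_pi_fintype]
  simp

end EquivariantMaps

section InfinitesimalIsometry

variable {E : Type*} [NormedAddCommGroup E] [InnerProductSpace ℝ E]

theorem mem_skewAdjointSubmodule_innerₗ {A : End ℝ E} :
    A ∈ (innerₗ E).skewAdjointSubmodule ↔ ∀ x y, ⟪A x, y⟫_ℝ = -⟪x, A y⟫_ℝ := by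
  rw [LinearMap.mem_skewAdjointSubmodule]
  simp [LinearMap.IsSkewAdjoint, LinearMap.IsAdjointPair]

theorem inner_apply_self_of_mem_skewAdjoint {A : End ℝ E}
    (hA : A ∈ (innerₗ E).skewAdjointSubmodule) (x : E) : ⟪x, A x⟫_ℝ = 0 := by
  have skew := mem_skewAdjointSubmodule_innerₗ.1 hA x x
  rw [real_inner_comm] at skew
  linarith

theorem map_mem_orthogonal_of_mem_skewAdjoint {A : End ℝ E}
    (hA : A ∈ (innerₗ E).skewAdjointSubmodule) {K : Submodule ℝ E} (hK : ∀ x ∈ K, A x ∈ K) {x : E}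
    (hx : x ∈ Kᗮ) : A x ∈ Kᗮ := by
  intro u hu
  rw [← neg_eq_zero, ← mem_skewAdjointSubmodule_innerₗ.1 hA]
  exact hx _ (hK u hu)

theorem eq_zero_of_mem_skewAdjoint_of_orthonormalBasis {n : ℕ} (e : OrthonormalBasis (Fin n) ℝ E)
    {A : End ℝ E} (hA : A ∈ (innerₗ E).skewAdjointSubmodule)
    (upper_zero : ∀ i j, j < i → ⟪e j, A (e i)⟫_ℝ = 0) : A = 0 := by
  refine e.toBasis.ext fun i ↦
    InnerProductSpace.ext_inner_left_basis e.toBasis fun j ↦ ?_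
  simp only [e.coe_toBasis, LinearMap.zero_apply, inner_zero_right]
  rcases lt_trichotomy j i with hji | rfl | hij
  · exact upper_zero i j hji
  · exact inner_apply_self_of_mem_skewAdjoint hA _
  · rw [← neg_eq_zero, ← mem_skewAdjointSubmodule_innerₗ.1 hA, real_inner_comm, upper_zero j i hij]

theorem finrank_skewAdjoint_le [FiniteDimensional ℝ E] :
    finrank ℝ (innerₗ E).skewAdjointSubmodule ≤ (finrank ℝ E).choose 2 := by
  let e := stdOrthonormalBasis ℝ E
  let upperEntries : End ℝ E →ₗ[ℝ] ((i : Fin (finrank ℝ E)) → Fin i → ℝ) :=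
    { toFun := fun A i k ↦ ⟪e (Fin.castLT k (k.2.trans i.2)), A (e i)⟫_ℝ
      map_add' := fun A B ↦ by ext; simp [inner_add_right]
      map_smul' := fun c A ↦ by ext; simp [inner_smul_right] }
  have injective : Function.Injective
      (upperEntries.domRestrict (innerₗ E).skewAdjointSubmodule) := by
    rw [injective_iff_map_eq_zero]
    rintro ⟨A, hA⟩ entries_zero
    exact Subtype.ext (eq_zero_of_mem_skewAdjoint_of_orthonormalBasis e hA fun i j hji ↦
      congrFun (congrFun entries_zero i) ⟨j, hji⟩)
  calc finrank ℝ (innerₗ E).skewAdjointSubmodule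
      ≤ finrank ℝ ((i : Fin (finrank ℝ E)) → Fin i → ℝ) :=
        LinearMap.finrank_le_finrank_of_injective injective
    _ = ∑ i ∈ Finset.range (finrank ℝ E), i := by
        simp [finrank_pi_fintype, Finset.sum_range]
    _ = (finrank ℝ E).choose 2 := by
        rw [Finset.sum_range_id, Nat.choose_two_right]

/-- The compression `P_K ∘ A|_K` of an endomorphism `A` to a subspace `K`. -/
def compression (K : Submodule ℝ E) [K.HasOrthogonalProjection] : End ℝ E →ₗ[ℝ] End ℝ K where
  toFun A := K.orthogonalProjectionOnto.toLinearMap ∘ₗ A ∘ₗ K.subtype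
  map_add' A B := by ext; simp
  map_smul' c A := by ext; simp

theorem compression_mem_skewAdjoint (K : Submodule ℝ E) [K.HasOrthogonalProjection] {A : End ℝ E}
    (hA : A ∈ (innerₗ E).skewAdjointSubmodule) :
    compression K A ∈ (innerₗ K).skewAdjointSubmodule := by
  rw [mem_skewAdjointSubmodule_innerₗ] at hA ⊢
  intro x y
  simpa [compression] using hA x y

theorem apply_eq_zero_of_compression_eq_zero {K : Submodule ℝ E} [K.HasOrthogonalProjection]
    {A : End ℝ E} (hA : compression K A = 0) {x : E} (hx : x ∈ K) (hAx : A x ∈ K) : A x = 0 := by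
  have projection_zero : K.orthogonalProjectionOnto (A x) = 0 := LinearMap.congr_fun hA ⟨x, hx⟩
  rw [Submodule.orthogonalProjectionOnto_eq_zero_iff] at projection_zero
  exact inner_self_eq_zero.1 (projection_zero _ hAx)

theorem finrank_skewAdjoint_inf_compatibleMaps_le [FiniteDimensional ℝ E] (K : Submodule ℝ E) :
    finrank ℝ ↥((innerₗ E).skewAdjointSubmodule ⊓ K.compatibleMaps K) ≤
      (finrank ℝ K).choose 2 + (finrank ℝ Kᗮ).choose 2 := by
  let S := (innerₗ E).skewAdjointSubmodule ⊓ K.compatibleMaps K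
  let blocks : S →ₗ[ℝ] (innerₗ K).skewAdjointSubmodule × (innerₗ Kᗮ).skewAdjointSubmodule :=
    ((compression K).restrict fun A (hA : A ∈ S) ↦ compression_mem_skewAdjoint K hA.1).prod
      ((compression Kᗮ).restrict fun A (hA : A ∈ S) ↦ compression_mem_skewAdjoint Kᗮ hA.1)
  have injective : Function.Injective blocks := by
    rw [injective_iff_map_eq_zero]
    rintro ⟨A, hA, hAK⟩ blocks_zero
    have block_K : compression K A = 0 := congrArg (fun B ↦ (B.1 : End ℝ K)) blocks_zero
    have block_perp : compression Kᗮ A = 0 := congrArg (fun B ↦ (B.2 : End ℝ Kᗮ)) blocks_zero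
    refine Subtype.ext (LinearMap.ext fun x ↦ ?_)
    obtain ⟨y, hy, z, hz, rfl⟩ := K.exists_add_mem_mem_orthogonal x
    change A (y + z) = 0
    rw [map_add, apply_eq_zero_of_compression_eq_zero block_K hy (hAK hy),
      apply_eq_zero_of_compression_eq_zero block_perp hz
        (map_mem_orthogonal_of_mem_skewAdjoint (K := K) hA (fun _ h ↦ hAK h) hz), add_zero]
  calc finrank ℝ S
      ≤ finrank ℝ ((innerₗ K).skewAdjointSubmodule × (innerₗ Kᗮ).skewAdjointSubmodule) :=
        LinearMap.finrank_le_finrank_of_injective injective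
    _ ≤ (finrank ℝ K).choose 2 + (finrank ℝ Kᗮ).choose 2 := by
        rw [finrank_prod]
        exact add_le_add finrank_skewAdjoint_le finrank_skewAdjoint_le

/-- The infinitesimal isometries `x ↦ A x + b` (`A` skew-adjoint) tangent to the subspace `K`, as
pairs `(A, b)`. For `K` the fixed space of an orthogonal involution these are exactly the
infinitesimal isometries commuting with the involution. -/
abbrev TangentInfinitesimalIsometry (K : Submodule ℝ E) : Type _ :=
  ↥((innerₗ E).skewAdjointSubmodule ⊓ K.compatibleMaps K) × K

theorem finrank_tangentInfinitesimalIsometry_le [FiniteDimensional ℝ E] (K : Submodule ℝ E) :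
    finrank ℝ (TangentInfinitesimalIsometry K) ≤
      (finrank ℝ K).choose 2 + (finrank ℝ Kᗮ).choose 2 + finrank ℝ K := by
  rw [finrank_prod]
  exact Nat.add_le_add_right (finrank_skewAdjoint_inf_compatibleMaps_le K) _

variable {ι : Type*}

theorem exists_linearMap_of_inner_skew {x y : ι → E} (hx : Submodule.span ℝ (Set.range x) = ⊤)
    (hxy : ∀ i j, ⟪x i, y j⟫_ℝ = -⟪x j, y i⟫_ℝ) : ∃ A : End ℝ E, ∀ i, A (x i) = y i := by
  let L := Finsupp.linearCombination ℝ x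
  let M := Finsupp.linearCombination ℝ y
  have L_range : LinearMap.range L = ⊤ := by rw [Finsupp.range_linearCombination, hx]
  have inner_M (j : ι) (c : ι →₀ ℝ) : ⟪x j, M c⟫_ℝ = -⟪L c, y j⟫_ℝ := by
    simp only [L, M, Finsupp.linearCombination_apply, Finsupp.sum, inner_sum, sum_inner,
      real_inner_smul_left, real_inner_smul_right, hxy j, mul_neg, Finset.sum_neg_distrib]
  have M_zero_of_L_zero (c : ι →₀ ℝ) (hc : L c = 0) : M c = 0 := by
    have inner_zero : innerₗ E (M c) = 0 := LinearMap.ext_on_range hx fun j ↦ by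
      rw [innerₗ_apply_apply, real_inner_comm, inner_M, hc, inner_zero_left, neg_zero,
        LinearMap.zero_apply]
    exact inner_self_eq_zero.1 (LinearMap.congr_fun inner_zero (M c))
  obtain ⟨r, hr⟩ := L.exists_rightInverse_of_surjective L_range
  refine ⟨M ∘ₗ r, fun i ↦ ?_⟩
  have L_section : L (r (x i) - Finsupp.single i 1) = 0 := by
    simp [L, ← LinearMap.comp_apply, hr]
  have M_section := M_zero_of_L_zero _ L_section
  rw [map_sub, sub_eq_zero] at M_section
  simpa [M] using M_section

theorem mem_skewAdjoint_of_span {x : ι → E} (hx : Submodule.span ℝ (Set.range x) = ⊤)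
    {A : End ℝ E} (hA : ∀ i j, ⟪A (x i), x j⟫_ℝ = -⟪x i, A (x j)⟫_ℝ) :
    A ∈ (innerₗ E).skewAdjointSubmodule := by
  have forms_eq : innerₗ E ∘ₗ A = -(innerₗ E).compl₂ A :=
    LinearMap.ext_on_range hx fun i ↦ LinearMap.ext_on_range hx fun j ↦ by simpa using hA i j
  exact mem_skewAdjointSubmodule_innerₗ.2 fun z w ↦
    LinearMap.congr_fun (LinearMap.congr_fun forms_eq z) w

variable {p v : ι → E}

theorem span_range_sub_eq_top (hspan : affineSpan ℝ (Set.range p) = ⊤) (o : ι) :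
    Submodule.span ℝ (Set.range fun i ↦ p i - p o) = ⊤ := by
  rw [← AffineSubspace.vectorSpan_eq_top_of_affineSpan_eq_top ℝ E E hspan,
    vectorSpan_range_eq_span_range_vsub_right ℝ p o]
  rfl

theorem exists_skewAdjoint_sub_eq_map_sub (hspan : affineSpan ℝ (Set.range p) = ⊤)
    (hv : ∀ i j, ⟪p i - p j, v i - v j⟫_ℝ = 0) :
    ∃ A ∈ (innerₗ E).skewAdjointSubmodule, ∀ i j, v i - v j = A (p i - p j) := by
  obtain ⟨-, o, -⟩ := AffineSubspace.nonempty_of_affineSpan_eq_top ℝ E E hspan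
  have hx := span_range_sub_eq_top hspan o
  have hxy (i j : ι) : ⟪p i - p o, v j - v o⟫_ℝ = -⟪p j - p o, v i - v o⟫_ℝ := by
    have hij := hv i j
    rw [← sub_sub_sub_cancel_right (p i) (p j) (p o),
      ← sub_sub_sub_cancel_right (v i) (v j) (v o)] at hij
    simp only [inner_sub_left (p i - p o), inner_sub_right _ (v i - v o)] at hij
    linarith [hv i o, hv j o]
  obtain ⟨A, hA⟩ := exists_linearMap_of_inner_skew hx hxy
  refine ⟨A, mem_skewAdjoint_of_span hx fun i j ↦ ?_, fun i j ↦ ?_⟩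
  · rw [hA, hA, real_inner_comm, hxy]
  · rw [← sub_sub_sub_cancel_right (p i) (p j) (p o), map_sub, hA, hA, sub_sub_sub_cancel_right]

/-- The velocities `A (p i) + b` that an infinitesimal isometry gives to the points `p i`. -/
def velocityAt (p : ι → E) (K : Submodule ℝ E) :
    TangentInfinitesimalIsometry K →ₗ[ℝ] (ι → E) where
  toFun m i := (m.1 : End ℝ E) (p i) + m.2
  map_add' m n := by ext i; simp [add_add_add_comm]
  map_smul' c m := by ext i; simp

theorem mem_range_velocityAt {C : E →ₗ[ℝ] E} {τ : ι → ι} (hspan : affineSpan ℝ (Set.range p) = ⊤)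
    (hp : p ∈ equivariantMaps C τ) (hv : v ∈ equivariantMaps C τ)
    (hpv : ∀ i j, ⟪p i - p j, v i - v j⟫_ℝ = 0) :
    v ∈ LinearMap.range (velocityAt p C.fixedSubmodule) := by
  rw [mem_equivariantMaps] at hp hv
  obtain ⟨-, o, -⟩ := AffineSubspace.nonempty_of_affineSpan_eq_top ℝ E E hspan
  obtain ⟨A, hA, hAv⟩ := exists_skewAdjoint_sub_eq_map_sub hspan hpv
  have A_comm : A ∘ₗ C = C ∘ₗ A :=
    LinearMap.ext_on_range (span_range_sub_eq_top hspan o) fun i ↦ by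
      simp only [LinearMap.comp_apply, ← hAv, map_sub C, hp, hv]
  have A_preserves_fixed : A ∈ C.fixedSubmodule.compatibleMaps C.fixedSubmodule := by
    intro x hx
    rw [Submodule.mem_comap, LinearMap.mem_fixedSubmodule_iff] at *
    rw [← LinearMap.comp_apply, ← A_comm, LinearMap.comp_apply, hx]
  have translation_fixed : v o - A (p o) ∈ C.fixedSubmodule := by
    have commute_at : C (A (p o)) = A (p (τ o)) := by
      rw [← LinearMap.comp_apply, ← A_comm, LinearMap.comp_apply, hp]
    rw [LinearMap.mem_fixedSubmodule_iff, map_sub, hv, commute_at, sub_eq_sub_iff_sub_eq_sub, hAv,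
      map_sub]
  refine ⟨(⟨A, hA, A_preserves_fixed⟩, ⟨v o - A (p o), translation_fixed⟩), funext fun i ↦ ?_⟩
  change A (p i) + (v o - A (p o)) = v i
  rw [add_sub_left_comm, ← map_sub, ← hAv, add_sub_cancel]

end InfinitesimalIsometry

section Framework

variable {E V : Type*} [NormedAddCommGroup E] [InnerProductSpace ℝ E] {G : SimpleGraph V}
  {C : E →ₗᵢ[ℝ] E} {φ : G ≃g G}

/-- The inner product `⟪q i - q j, w i - w j⟫` attached to an unordered pair `s(i, j)`, which is
the polarisation of its squared length `‖q i - q j‖ ^ 2`. -/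
def edgeInner (q w : V → E) : Sym2 V → ℝ :=
  Sym2.lift ⟨fun i j ↦ ⟪q i - q j, w i - w j⟫_ℝ, fun i j ↦ by
    beta_reduce
    rw [← neg_sub (q j), ← neg_sub (w j), inner_neg_neg]⟩

@[simp]
theorem edgeInner_mk (q w : V → E) (i j : V) :
    edgeInner q w s(i, j) = ⟪q i - q j, w i - w j⟫_ℝ :=
  rfl

/-- Placements (or velocities) of the vertices of `G` that are compatible with the symmetry: `C`
moves the points as the automorphism `φ` moves the vertices. -/
abbrev symmetricPlacement (C : E →ₗᵢ[ℝ] E) (φ : G ≃g G) : Submodule ℝ (V → E) :=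
  equivariantMaps C.toLinearMap φ

/-- Edge weights constant on the `φ`-orbits of edges. -/
abbrev symmetricEdgeWeight (φ : G ≃g G) : Submodule ℝ (G.edgeSet → ℝ) :=
  equivariantMaps LinearMap.id φ.mapEdgeSet

theorem edgeInner_mem_symmetricEdgeWeight {q w : V → E} (hq : q ∈ symmetricPlacement C φ)
    (hw : w ∈ symmetricPlacement C φ) :
    (fun e : G.edgeSet ↦ edgeInner q w e) ∈ symmetricEdgeWeight φ := by
  rw [mem_equivariantMaps] at *
  rintro ⟨⟨i, j⟩, _⟩
  change ⟪q i - q j, w i - w j⟫_ℝ = ⟪q (φ i) - q (φ j), w (φ i) - w (φ j)⟫_ℝ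
  simp only [← hq, ← hw, ← map_sub]
  exact (C.inner_map_map _ _).symm

/-- The rigidity map restricted to symmetric placements, as a bilinear form in placement and
velocity: its diagonal is the vector of squared edge lengths, and fixing the placement in the first
argument gives the symmetric part of the rigidity matrix. -/
def symmetricRigidityForm (C : E →ₗᵢ[ℝ] E) (φ : G ≃g G) :
    symmetricPlacement C φ →ₗ[ℝ] symmetricPlacement C φ →ₗ[ℝ] symmetricEdgeWeight φ :=
  LinearMap.mk₂ ℝ
    (fun q w ↦ ⟨fun e ↦ edgeInner q.1 w.1 e, edgeInner_mem_symmetricEdgeWeight q.2 w.2⟩)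
    (fun q r w ↦ by
      ext ⟨⟨i, j⟩, _⟩
      simp [add_sub_add_comm, inner_add_left])
    (fun c q w ↦ by
      ext ⟨⟨i, j⟩, _⟩
      simp [← smul_sub, real_inner_smul_left])
    (fun q w r ↦ by
      ext ⟨⟨i, j⟩, _⟩
      simp [add_sub_add_comm, inner_add_right])
    (fun c q w ↦ by
      ext ⟨⟨i, j⟩, _⟩
      simp [← smul_sub, real_inner_smul_right])

theorem symmetricRigidityForm_comm (q w : symmetricPlacement C φ) :
    symmetricRigidityForm C φ q w = symmetricRigidityForm C φ w q := by
  ext ⟨⟨i, j⟩, _⟩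
  exact real_inner_comm _ _

/-- The edge weights on `G`, extended by zero to all unordered pairs of vertices. -/
def extendEdgeWeight : (G.edgeSet → ℝ) →ₗ[ℝ] (Sym2 V → ℝ) :=
  Function.ExtendByZero.linearMap ℝ Subtype.val

theorem extendEdgeWeight_apply (ω : G.edgeSet → ℝ) (e : G.edgeSet) :
    extendEdgeWeight ω e = ω e :=
  Subtype.val_injective.extend_apply _ _ _

theorem extendEdgeWeight_map {ω : G.edgeSet → ℝ} (hω : ω ∈ symmetricEdgeWeight φ) {e : Sym2 V}
    (he : e ∈ G.edgeSet) : extendEdgeWeight ω (Sym2.map φ e) = extendEdgeWeight ω e := by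
  have invariant := mem_equivariantMaps.1 hω ⟨e, he⟩
  rw [← extendEdgeWeight_apply ω, LinearMap.id_apply, ← extendEdgeWeight_apply ω] at invariant
  exact invariant.symm

section Stress

variable [Fintype V]

/-- The total force `∑ j, ω s(i, j) • (p i - p j)` that edge weights `ω` exert on each vertex `i`;
self-stresses are the weights with vanishing net force. -/
def netForce (G : SimpleGraph V) [DecidableRel G.Adj] (p : V → E) :
    (Sym2 V → ℝ) →ₗ[ℝ] (V → E) where
  toFun ω i := ∑ j ∈ G.neighborFinset i, ω s(i, j) • (p i - p j)
  map_add' ω ψ := by ext i; simp [add_smul, Finset.sum_add_distrib]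
  map_smul' c ω := by ext i; simp [mul_smul, Finset.smul_sum]

variable [DecidableRel G.Adj]

theorem netForce_apply (p : V → E) (ω : Sym2 V → ℝ) (i : V) :
    netForce G p ω i = ∑ j ∈ G.neighborFinset i, ω s(i, j) • (p i - p j) :=
  rfl

theorem two_mul_sum_inner_netForce (p w : V → E) (ω : Sym2 V → ℝ) :
    2 * ∑ i, ⟪netForce G p ω i, w i⟫_ℝ =
      ∑ i, ∑ j ∈ G.neighborFinset i, ω s(i, j) * edgeInner p w s(i, j) := by
  have work_eq : ∑ i, ⟪netForce G p ω i, w i⟫_ℝ =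
      ∑ i, ∑ j ∈ G.neighborFinset i, ω s(i, j) * ⟪p i - p j, w i⟫_ℝ := by
    simp only [netForce_apply, sum_inner, real_inner_smul_left]
  have work_swap : ∑ i, ⟪netForce G p ω i, w i⟫_ℝ =
      ∑ i, ∑ j ∈ G.neighborFinset i, ω s(i, j) * ⟪p j - p i, w j⟫_ℝ := by
    rw [work_eq, Finset.sum_comm' (t' := Finset.univ) (s' := fun j ↦ G.neighborFinset j)
      (by simp [G.adj_comm])]
    simp only [Sym2.eq_swap]
  rw [two_mul]
  nth_rw 1 [work_eq]
  rw [work_swap]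
  simp only [← Finset.sum_add_distrib]
  refine Finset.sum_congr rfl fun i _ ↦ Finset.sum_congr rfl fun j _ ↦ ?_
  rw [edgeInner_mk, ← neg_sub (p i) (p j), inner_neg_left, inner_sub_right]
  ring

theorem netForce_mem_symmetricPlacement {p : V → E} (hp : p ∈ symmetricPlacement C φ)
    {ω : Sym2 V → ℝ} (hω : ∀ e ∈ G.edgeSet, ω (Sym2.map φ e) = ω e) :
    netForce G p ω ∈ symmetricPlacement C φ := by
  rw [mem_equivariantMaps] at *
  intro i
  rw [netForce_apply, netForce_apply, map_sum]
  have mem_iff (j : V) : j ∈ G.neighborFinset i ↔ φ j ∈ G.neighborFinset (φ i) := by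
    simp only [SimpleGraph.mem_neighborFinset, φ.map_adj_iff]
  refine Finset.sum_equiv φ.toEquiv mem_iff fun j hj ↦ ?_
  have weight_eq : ω s(φ i, φ j) = ω s(i, j) := hω s(i, j) (by simpa using hj)
  rw [map_smul, map_sub, hp, hp, ← weight_eq]
  rfl

/-- If the symmetric rigidity matrix kills the net force of `ω`, that net force does zero work on
itself, so it vanishes and `ω` is a stress. -/
theorem surjective_symmetricRigidityForm {p : V → E} (hp : p ∈ symmetricPlacement C φ)
    (hnostress : ∀ ω : Sym2 V → ℝ,
      (∀ i, ∑ j ∈ G.neighborFinset i, ω s(i, j) • (p i - p j) = 0) →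
      (∀ e ∈ G.edgeSet, ω (Sym2.map φ e) = ω e) → ∀ e ∈ G.edgeSet, ω e = 0) :
    Function.Surjective (symmetricRigidityForm C φ ⟨p, hp⟩) := by
  let force : symmetricEdgeWeight φ →ₗ[ℝ] symmetricPlacement C φ :=
    (netForce G p ∘ₗ extendEdgeWeight).restrict fun ω hω ↦
      netForce_mem_symmetricPlacement hp fun _ ↦ extendEdgeWeight_map hω
  suffices Function.Injective (symmetricRigidityForm C φ ⟨p, hp⟩ ∘ₗ force) from
    .of_comp (LinearMap.surjective_of_injective this)
  rw [injective_iff_map_eq_zero]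
  intro ω rigidity_zero
  have edgeInner_zero (e : Sym2 V) (he : e ∈ G.edgeSet) : edgeInner p (force ω).1 e = 0 :=
    congrFun (congrArg Subtype.val rigidity_zero) ⟨e, he⟩
  have work_zero : ∑ i, ⟪(force ω).1 i, (force ω).1 i⟫_ℝ = 0 := by
    have work := two_mul_sum_inner_netForce (G := G) p (force ω).1 (extendEdgeWeight ω.1)
    rw [Finset.sum_eq_zero fun i _ ↦ Finset.sum_eq_zero fun j hj ↦ by
      rw [edgeInner_zero s(i, j) (by simpa using hj), mul_zero]] at work
    exact (mul_eq_zero_iff_left two_ne_zero).1 work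
  have force_zero (i : V) : (force ω).1 i = 0 :=
    inner_self_eq_zero.1 ((Finset.sum_eq_zero_iff_of_nonneg
      fun _ _ ↦ real_inner_self_nonneg).1 work_zero i (Finset.mem_univ i))
  ext e
  rw [← extendEdgeWeight_apply ω.1]
  exact hnostress _ force_zero (fun _ ↦ extendEdgeWeight_map ω.2) e e.2

end Stress

section Flex

/-- `P` is a finite flex of the framework `(G, p)`, parametrised by `[0, 1]`, that preserves the
symmetry (`C` on points, `φ` on vertices): edge lengths are constant, while the distance of some
fixed pair of vertices differs from its initial value at all positive times. -/
def IsSymmetricFlex (C : E →ₗᵢ[ℝ] E) (φ : G ≃g G) (p : V → E) (P : ℝ → V → E) : Prop :=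
  ContinuousOn P (Set.Icc 0 1) ∧
  P 0 = p ∧
  (∀ t ∈ Set.Icc (0 : ℝ) 1, ∀ i j, G.Adj i j → ‖P t i - P t j‖ = ‖p i - p j‖) ∧
  (∃ k l, ∀ t ∈ Set.Ioc (0 : ℝ) 1, ‖P t k - P t l‖ ≠ ‖p k - p l‖) ∧
  (∀ t ∈ Set.Icc (0 : ℝ) 1, ∀ i, C (P t i) = P t (φ i))

theorem eventually_norm_ne_of_hasDerivAt {x : ℝ → E} {x' : E} {t₀ : ℝ}
    (hx : HasDerivAt x x' t₀) (hxx' : ⟪x t₀, x'⟫_ℝ ≠ 0) :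
    ∀ᶠ t in 𝓝[≠] t₀, ‖x t‖ ≠ ‖x t₀‖ := by
  filter_upwards [hx.norm_sq.eventually_ne (c := ‖x t₀‖ ^ 2) (mul_ne_zero two_ne_zero hxx')]
    with t normSq_ne norm_eq
  exact normSq_ne (by rw [norm_eq])

theorem norm_sub_eq_of_symmetricRigidityForm_eq {q p : symmetricPlacement C φ}
    (h : symmetricRigidityForm C φ q q = symmetricRigidityForm C φ p p) {i j : V}
    (hij : G.Adj i j) : ‖q.1 i - q.1 j‖ = ‖p.1 i - p.1 j‖ := by
  have inner_eq : ⟪q.1 i - q.1 j, q.1 i - q.1 j⟫_ℝ = ⟪p.1 i - p.1 j, p.1 i - p.1 j⟫_ℝ :=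
    congrFun (congrArg Subtype.val h) ⟨s(i, j), hij⟩
  rwa [real_inner_self_eq_norm_sq, real_inner_self_eq_norm_sq,
    sq_eq_sq₀ (norm_nonneg _) (norm_nonneg _)] at inner_eq

theorem exists_isSymmetricFlex [Finite V] [FiniteDimensional ℝ E] {p v : symmetricPlacement C φ}
    (hsurj : Function.Surjective (symmetricRigidityForm C φ p))
    (hv : symmetricRigidityForm C φ p v = 0) {k l : V}
    (hkl : ⟪p.1 k - p.1 l, v.1 k - v.1 l⟫_ℝ ≠ 0) : ∃ P, IsSymmetricFlex C φ p P := by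
  have := Fintype.ofFinite V
  obtain ⟨γ, rfl, hasDerivAt_γ, hγ⟩ :=
    exists_quadricCurve_hasDerivAt symmetricRigidityForm_comm hsurj hv
  have hasDerivAt_coord (i : V) : HasDerivAt (fun t ↦ (γ t).1 i) (v.1 i) 0 :=
    hasDerivAt_pi.1 ((symmetricPlacement C φ).subtypeL.hasFDerivAt.comp_hasDerivAt 0 hasDerivAt_γ) i
  have eventually_ne := eventually_nhdsWithin_iff.1
    (eventually_norm_ne_of_hasDerivAt ((hasDerivAt_coord k).sub (hasDerivAt_coord l)) hkl)
  obtain ⟨ε, ε_pos, hε⟩ := exists_pos_forall_mem_Icc_of_eventually (hγ.and eventually_ne)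
  refine ⟨fun t ↦ (γ (ε * t)).1, fun t ht ↦ ?_, by simp only [mul_zero], fun t ht i j hij ↦ ?_,
    ⟨k, l, fun t ht ↦ ?_⟩, fun t _ i ↦ mem_equivariantMaps.1 (γ (ε * t)).2 i⟩
  · have continuousAt_rescaled : ContinuousAt (fun s ↦ γ (ε * s)) t :=
      ContinuousAt.comp (hε t ht).1.1 (continuous_const_mul ε).continuousAt
    exact (continuous_subtype_val.continuousAt.comp continuousAt_rescaled).continuousWithinAt
  · exact norm_sub_eq_of_symmetricRigidityForm_eq (hε t ht).1.2 hij
  · exact (hε t (Set.Ioc_subset_Icc_self ht)).2 (mul_pos ε_pos ht.1).ne'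

theorem exists_nontrivial_infinitesimalFlex [Finite V] [FiniteDimensional ℝ E]
    {p : symmetricPlacement C φ} (hspan : affineSpan ℝ (Set.range p.1) = ⊤)
    (hdim : finrank ℝ (TangentInfinitesimalIsometry C.toLinearMap.fixedSubmodule) <
      finrank ℝ (LinearMap.ker (symmetricRigidityForm C φ p))) :
    ∃ v, symmetricRigidityForm C φ p v = 0 ∧ ∃ k l, ⟪p.1 k - p.1 l, v.1 k - v.1 l⟫_ℝ ≠ 0 := by
  by_contra! trivial_of_mem_ker
  have ker_le : (LinearMap.ker (symmetricRigidityForm C φ p)).map (symmetricPlacement C φ).subtype ≤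
      LinearMap.range (velocityAt p.1 C.toLinearMap.fixedSubmodule) := by
    rintro _ ⟨v, hv, rfl⟩
    exact mem_range_velocityAt hspan p.2 v.2 (trivial_of_mem_ker v hv)
  have finrank_ker_le := Submodule.finrank_mono ker_le
  rw [Submodule.finrank_map_subtype_eq] at finrank_ker_le
  exact hdim.not_ge (finrank_ker_le.trans (LinearMap.finrank_range_le _))

end Flex

section Counting

theorem involutive_mapEdgeSet (hφ : Function.Involutive φ) :
    Function.Involutive φ.mapEdgeSet := by
  rintro ⟨e, he⟩
  apply Subtype.ext
  change Sym2.map φ (Sym2.map φ e) = e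
  rw [Sym2.map_map, hφ.comp_self, Sym2.map_id, id]

theorem trace_eq_finrank_fixedSubmodule_sub [FiniteDimensional ℝ E] {f : E →ₗ[ℝ] E}
    (hf : Function.Involutive f) :
    LinearMap.trace ℝ E f = finrank ℝ f.fixedSubmodule - finrank ℝ f.fixedSubmoduleᗮ := by
  have finrank_add : (finrank ℝ f.fixedSubmodule : ℝ) + finrank ℝ f.fixedSubmoduleᗮ =
      finrank ℝ E := mod_cast f.fixedSubmodule.finrank_add_finrank_orthogonal
  linarith [two_mul_finrank_fixedSubmodule hf]

variable [Fintype V] [DecidableEq V]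

theorem two_mul_finrank_symmetricPlacement [FiniteDimensional ℝ E] (hC : Function.Involutive C)
    (hφ : Function.Involutive φ) {m n : ℕ} (hm : finrank ℝ C.toLinearMap.fixedSubmodule = m)
    (hn : finrank ℝ C.toLinearMap.fixedSubmoduleᗮ = n) :
    2 * (finrank ℝ (symmetricPlacement C φ) : ℝ) = (m + n) * Fintype.card V +
      (Finset.univ.filter fun i ↦ φ i = i).card * ((m : ℝ) - n) := by
  rw [two_mul_finrank_equivariantMaps hC hφ, trace_eq_finrank_fixedSubmodule_sub hC, hm, hn,
    ← C.toLinearMap.fixedSubmodule.finrank_add_finrank_orthogonal, hm, hn, Nat.cast_add, mul_comm]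

variable [DecidableRel G.Adj]

theorem card_filter_mapEdgeSet_eq_self :
    (Finset.univ.filter fun e ↦ φ.mapEdgeSet e = e).card =
      (G.edgeFinset.filter fun e ↦ Sym2.map φ e = e).card := by
  refine Finset.card_bij (fun e _ ↦ e.1) (fun e he ↦ ?_) (fun _ _ _ _ ↦ Subtype.ext) fun e he ↦ ?_
  · rw [Finset.mem_filter] at he
    exact Finset.mem_filter.2 ⟨G.mem_edgeFinset.2 e.2, congrArg Subtype.val he.2⟩
  · rw [Finset.mem_filter, SimpleGraph.mem_edgeFinset] at he
    exact ⟨⟨e, he.1⟩, Finset.mem_filter.2 ⟨Finset.mem_univ _, Subtype.ext he.2⟩, rfl⟩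

theorem two_mul_finrank_symmetricEdgeWeight (hφ : Function.Involutive φ) :
    2 * (finrank ℝ (symmetricEdgeWeight φ) : ℝ) =
      G.edgeFinset.card + (G.edgeFinset.filter fun e ↦ Sym2.map φ e = e).card := by
  rw [two_mul_finrank_equivariantMaps (fun _ ↦ rfl) (involutive_mapEdgeSet hφ),
    LinearMap.trace_id, card_filter_mapEdgeSet_eq_self, finrank_self, Nat.cast_one, mul_one,
    mul_one, G.edgeFinset_card]

end Counting

/-- The inequality `hcount` compares dimensions, doubled to clear the halves in the trace formula:
trivial symmetric motions plus edge orbits on the left, symmetric placements on the right. -/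
theorem stmt_10_general [Fintype V] [DecidableEq V] [DecidableRel G.Adj] [FiniteDimensional ℝ E]
    (hC : Function.Involutive C) (hφ : Function.Involutive φ) {m n : ℕ}
    (hm : finrank ℝ C.toLinearMap.fixedSubmodule = m)
    (hn : finrank ℝ C.toLinearMap.fixedSubmoduleᗮ = n)
    (hcount : 2 * (m.choose 2 + n.choose 2 + m : ℝ) + G.edgeFinset.card +
        (G.edgeFinset.filter fun e ↦ Sym2.map φ e = e).card <
      (m + n) * Fintype.card V + (Finset.univ.filter fun i ↦ φ i = i).card * ((m : ℝ) - n))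
    {p : V → E} (hsym : ∀ i, C (p i) = p (φ i)) (hspan : affineSpan ℝ (Set.range p) = ⊤)
    (hnostress : ∀ ω : Sym2 V → ℝ,
      (∀ i, ∑ j ∈ G.neighborFinset i, ω s(i, j) • (p i - p j) = 0) →
      (∀ e ∈ G.edgeSet, ω (Sym2.map φ e) = ω e) → ∀ e ∈ G.edgeSet, ω e = 0) :
    ∃ P, IsSymmetricFlex C φ p P := by
  have hp : p ∈ symmetricPlacement C φ := mem_equivariantMaps.2 hsym
  have hsurj := surjective_symmetricRigidityForm hp hnostress
  have rank_nullity : (finrank ℝ (symmetricEdgeWeight φ) : ℝ) +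
      finrank ℝ (LinearMap.ker (symmetricRigidityForm C φ ⟨p, hp⟩)) =
        finrank ℝ (symmetricPlacement C φ) := by
    rw [← LinearMap.finrank_range_add_finrank_ker (symmetricRigidityForm C φ ⟨p, hp⟩),
      LinearMap.range_eq_top.2 hsurj, finrank_top, Nat.cast_add]
  have trivial_lt_ker : m.choose 2 + n.choose 2 + m <
      finrank ℝ (LinearMap.ker (symmetricRigidityForm C φ ⟨p, hp⟩)) := by
    rify
    linarith [two_mul_finrank_symmetricEdgeWeight hφ,
      two_mul_finrank_symmetricPlacement hC hφ hm hn]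
  have finrank_trivial_le :=
    finrank_tangentInfinitesimalIsometry_le C.toLinearMap.fixedSubmodule
  rw [hm, hn] at finrank_trivial_le
  obtain ⟨v, hv, k, l, hkl⟩ := exists_nontrivial_infinitesimalFlex (p := ⟨p, hp⟩) hspan
    (finrank_trivial_le.trans_lt trivial_lt_ker)
  exact exists_isSymmetricFlex hsurj hv hkl

end Framework

section Reflection

theorem fixedSpace_eq_fixedSubmodule {d : ℕ} (C : Euc d ≃ₗᵢ[ℝ] Euc d) :
    fixedSpace C = C.toLinearIsometry.toLinearMap.fixedSubmodule :=
  (LinearMap.fixedSubmodule_eq_ker _).symm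

theorem finrank_orthogonal_eq_one_of_finrank_eq_pred {d : ℕ} (hd : 1 ≤ d)
    {K : Submodule ℝ (Euc d)} (hK : finrank ℝ K = d - 1) : finrank ℝ Kᗮ = 1 :=
  Submodule.finrank_add_finrank_orthogonal'
    (by rw [hK, Nat.sub_add_cancel hd, finrank_euclideanSpace_fin])

theorem symmetricCount_lt_of_reflection {d v e j b : ℕ} (hd : 2 < d)
    (hcount : e + (d + 1).choose 2 = d * v)
    (hjb : (j : ℝ) > b / ((d : ℝ) - 2) + d * ((d : ℝ) - 3) / (2 * ((d : ℝ) - 2))) :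
    2 * ((d - 1).choose 2 + Nat.choose 1 2 + (d - 1 : ℕ) : ℝ) + e + b <
      ((d - 1 : ℕ) + (1 : ℕ)) * v + j * (((d - 1 : ℕ) : ℝ) - (1 : ℕ)) := by
  have d_sub_two_pos : (0 : ℝ) < d - 2 := sub_pos.2 (mod_cast hd)
  have count_real : (e : ℝ) + (d + 1) * d / 2 = d * v := by
    have := congrArg (Nat.cast : ℕ → ℝ) hcount
    push_cast [Nat.cast_choose_two] at this
    linarith
  have fixed_lt : b + d * ((d : ℝ) - 3) / 2 < j * ((d : ℝ) - 2) := by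
    calc b + d * ((d : ℝ) - 3) / 2
        = (b / ((d : ℝ) - 2) + d * ((d : ℝ) - 3) / (2 * ((d : ℝ) - 2))) * ((d : ℝ) - 2) := by
          field_simp
      _ < j * ((d : ℝ) - 2) := mul_lt_mul_of_pos_right hjb d_sub_two_pos
  have cast_pred : ((d - 1 : ℕ) : ℝ) = d - 1 := Nat.cast_pred (by omega)
  rw [Nat.cast_choose_two, Nat.cast_choose_two, cast_pred]
  push_cast
  linarith

end Reflection

/-- Theorem 6.9, mirror symmetry in dimension `d > 3`:
`s ∈ O(d)` a reflection (orthogonal involution whose fixed subspace is a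
hyperplane), `S = {I, s}`, `Φ(s) = σ` with
`j_s > b_s/(d-2) + d(d-3)/(2(d-2))`, and `|E| = d|V| - (d+1 choose 2)`;
then a symmetric framework spanning `ℝ^d` with no nonzero fully symmetric
self-stress has a symmetry-preserving finite flex. -/
theorem stmt_10 {d : ℕ} (hd : 3 < d) {V : Type*} [Fintype V] [DecidableEq V]
    (G : SimpleGraph V) [DecidableRel G.Adj]
    (hcount : G.edgeFinset.card + (d + 1).choose 2 = d * Fintype.card V)
    (C : Euc d ≃ₗᵢ[ℝ] Euc d) (hC2 : ∀ v, C (C v) = v)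
    (hrefl : Module.finrank ℝ (fixedSpace C) = d - 1)
    (σ : Equiv.Perm V) (hσ2 : σ * σ = 1)
    (hσadj : ∀ i j : V, G.Adj (σ i) (σ j) ↔ G.Adj i j)
    (hjb : (((Finset.univ.filter (fun i : V => σ i = i)).card : ℝ)) >
      ((G.edgeFinset.filter (fun e => Sym2.map σ e = e)).card : ℝ) / ((d : ℝ) - 2)
        + (d : ℝ) * ((d : ℝ) - 3) / (2 * ((d : ℝ) - 2)))
    (p : V → Euc d) (hp : Function.Injective p)
    (hsym : ∀ i, C (p i) = p (σ i))
    (hspan : affineSpan ℝ (Set.range p) = ⊤)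
    (hnostress : ∀ ω : Sym2 V → ℝ,
      (∀ i : V, ∑ j ∈ G.neighborFinset i, ω s(i, j) • (p i - p j) = 0) →
      (∀ e ∈ G.edgeSet, ω (Sym2.map σ e) = ω e) →
      ∀ e ∈ G.edgeSet, ω e = 0) :
    ∃ P : ℝ → V → Euc d,
      ContinuousOn P (Set.Icc 0 1) ∧
      P 0 = p ∧
      (∀ t ∈ Set.Icc (0:ℝ) 1, ∀ i j : V, G.Adj i j → ‖P t i - P t j‖ = ‖p i - p j‖) ∧
      (∃ k l : V, ∀ t ∈ Set.Ioc (0:ℝ) 1, ‖P t k - P t l‖ ≠ ‖p k - p l‖) ∧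
      (∀ t ∈ Set.Icc (0:ℝ) 1, ∀ i, C (P t i) = P t (σ i)) := by
  rw [fixedSpace_eq_fixedSubmodule] at hrefl
  exact stmt_10_general (C := C.toLinearIsometry) (φ := ⟨σ, hσadj _ _⟩) hC2
    (Equiv.Perm.congr_fun hσ2) hrefl
    (finrank_orthogonal_eq_one_of_finrank_eq_pred (by omega) hrefl)
    (symmetricCount_lt_of_reflection (by omega) hcount hjb) hsym hspan hnostress
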